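/- arXiv:2405.03158 — 3 statements merged into one kernel-verified Lean document; each statement's English description precedes it below -/
import Mathlib

section
/- Assume that for each leader action a the best response F_br(a) is the unique maximizer of b ↦ μ_f(a,b), and that a_se is the unique maximizer of a ↦ μ_l(a, F_br(a)) (so the set of qualified pairs is nonempty). Then the optimal value of the follower's manipulation problem equals the greedy value computed by FBM: max{ μ_f(a′,b′) : (a′,b′) a qualified pair } = max{ μ_f(a, b) : (a, b) ∈ 𝒜 × ℬ and μ_l(a, b) > min_{b′ ∈ ℬ} μ_l(a′, b′) for every a′ ≠ a }. -/
/-- An action pair `(a', b')` is a *qualified pair* if some response function `F`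
makes `{F, (a', b')}` a qualified manipulation: `b' = F a'` and
`μ_l(a', b') > μ_l(a, F(a))` for every `a ≠ a'`. -/
def QualifiedPair {A B : Type*} (μl : A → B → ℝ) (a' : A) (b' : B) : Prop :=
  ∃ F : A → B, b' = F a' ∧ ∀ a : A, a ≠ a' → μl a' b' > μl a (F a)

/-- The optimal value of the follower's manipulation problem (the maximum of `μ_f` over
qualified pairs) equals the greedy value computed by FBM (the maximum of `μ_f` over pairs
`(a, b)` such that `μ_l(a, b) > min_{b'} μ_l(a', b')` for every `a' ≠ a`): there is a common
real number that is the greatest value of both sets. -/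
theorem fbm_computes_optimal_value
    {A B : Type*} [Fintype A] [Fintype B] [Nonempty A] [Nonempty B]
    (μl μf : A → B → ℝ)
    (hμl : ∀ a b, μl a b ∈ Set.Icc (0 : ℝ) 1)
    (hμf : ∀ a b, μf a b ∈ Set.Icc (0 : ℝ) 1)
    (Fbr : A → B)
    (hbr : ∀ a : A, ∀ b : B, b ≠ Fbr a → μf a b < μf a (Fbr a))
    (a_se : A) (b_se : B)
    (hse : ∀ a : A, a ≠ a_se → μl a (Fbr a) < μl a_se (Fbr a_se))
    (hbse : b_se = Fbr a_se) :
    ∃ m : ℝ,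
      IsGreatest {x : ℝ | ∃ a : A, ∃ b : B, QualifiedPair μl a b ∧ x = μf a b} m ∧
      IsGreatest {x : ℝ | ∃ a : A, ∃ b : B,
        (∀ a' : A, a' ≠ a → μl a b > Finset.univ.inf' Finset.univ_nonempty (μl a')) ∧
        x = μf a b} m := by
  have key : ∀ (a : A) (b : B), QualifiedPair μl a b ↔
      ∀ a' : A, a' ≠ a → μl a b > Finset.univ.inf' Finset.univ_nonempty (μl a') := by
    classical
    intro a b
    constructor
    · rintro ⟨F, _, hF⟩ a' ha'
      exact lt_of_le_of_lt (Finset.inf'_le (μl a') (Finset.mem_univ (F a'))) (hF a' ha')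
    · intro h
      have hmin : ∀ a' : A, ∃ b' : B,
          Finset.univ.inf' Finset.univ_nonempty (μl a') = μl a' b' := by
        intro a'
        obtain ⟨b', _, hb'⟩ :=
          Finset.exists_mem_eq_inf' (Finset.univ_nonempty (α := B)) (μl a')
        exact ⟨b', hb'⟩
      choose G hG using hmin
      refine ⟨Function.update G a b, by simp, ?_⟩
      intro a' ha'
      rw [Function.update_of_ne ha', ← hG a']
      exact h a' ha'
  simp only [← key, and_self]
  have hfin : {x : ℝ | ∃ a : A, ∃ b : B, QualifiedPair μl a b ∧ x = μf a b}.Finite := by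
    refine (Set.finite_range (fun p : A × B => μf p.1 p.2)).subset ?_
    rintro x ⟨a, b, _, rfl⟩
    exact ⟨(a, b), rfl⟩
  have hne : {x : ℝ | ∃ a : A, ∃ b : B, QualifiedPair μl a b ∧ x = μf a b}.Nonempty :=
    ⟨_, a_se, Fbr a_se, ⟨Fbr, rfl, hse⟩, rfl⟩
  obtain ⟨m, hm, hmax⟩ := Set.exists_max_image _ id hfin hne
  exact ⟨m, hm, fun y hy => hmax y hy⟩
end

section
/- Let 𝒜, ℬ be finite nonempty sets and μ_l, μ_f : 𝒜 × ℬ → ℝ take values in [0,1]. Let F_opt, F_br : 𝒜 → ℬ be response functions such that a ↦ μ_l(a, F_opt(a)) has a unique maximizer a_fm with b_fm = F_opt(a_fm), and a ↦ μ_l(a, F_br(a)) has a unique maximizer a_se with b_se = F_br(a_se). Suppose (a_t)_{t≥1} is a sequence in 𝒜 that is no-regret with respect to a ↦ μ_l(a, F_opt(a)), and (ā_t)_{t≥1} is a sequence in 𝒜 that is no-regret with respect to a ↦ μ_l(a, F_br(a)). Then, as T → ∞, (1/T) Σ_{t=1}^{T} μ_f(a_t, F_opt(a_t)) − (1/T)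 Σ_{t=1}^{T} μ_f(ā_t, F_br(ā_t)) converges to Gap(a_fm, a_se) := μ_f(a_fm, b_fm) − μ_f(a_se, b_se). -/
open Filter

/-- A sequence `(a_t)` in a finite nonempty set is *no-regret* with respect to `f` if the
average regret `(1/T) Σ_{t=1}^T (max_a f(a) − f(a_t))` tends to `0` as `T → ∞`. -/
def NoRegret {A : Type*} [Fintype A] [Nonempty A] (aseq : ℕ → A) (f : A → ℝ) : Prop :=
  Tendsto
    (fun T : ℕ =>
      (∑ t ∈ Finset.Icc 1 T,
        (Finset.univ.sup' Finset.univ_nonempty f - f (aseq t))) / T)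
    atTop (nhds 0)

theorem avg_tendsto_of_noRegret {A : Type*} [Fintype A] [Nonempty A] (f g : A → ℝ) (a0 : A)
    (h : ∀ a, a ≠ a0 → f a < f a0) (s : ℕ → A) (hs : NoRegret s f) :
    Tendsto (fun T : ℕ => (∑ t ∈ Finset.Icc 1 T, g (s t)) / T) atTop (nhds (g a0)) := by
  have hle : ∀ a, f a ≤ f a0 := fun a => by
    by_cases e : a = a0
    · rw [e]
    · exact (h a e).le
  have hsup : Finset.univ.sup' Finset.univ_nonempty f = f a0 :=
    le_antisymm (Finset.sup'_le _ _ fun a _ => hle a) (Finset.le_sup' f (Finset.mem_univ a0))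
  unfold NoRegret at hs
  rw [hsup] at hs
  obtain ⟨C, hC⟩ : ∃ C : ℝ, ∀ a, |g a - g a0| ≤ C * (f a0 - f a) := by
    refine ⟨∑ a, |g a - g a0| / (f a0 - f a), fun a => ?_⟩
    by_cases e : a = a0
    · simp [e]
    · have hp : 0 < f a0 - f a := sub_pos.2 (h a e)
      rw [← div_le_iff₀ hp]
      exact Finset.single_le_sum (f := fun a => |g a - g a0| / (f a0 - f a))
        (fun i _ => div_nonneg (abs_nonneg _) (sub_nonneg.2 (hle i))) (Finset.mem_univ a)
  have hs2 := hs.const_mul C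
  rw [mul_zero] at hs2
  rw [tendsto_iff_norm_sub_tendsto_zero]
  refine squeeze_zero' (Eventually.of_forall fun _ => norm_nonneg _) ?_ hs2
  filter_upwards [eventually_gt_atTop 0] with T hT
  have hT' : (0 : ℝ) < T := by exact_mod_cast hT
  have e1 : (∑ t ∈ Finset.Icc 1 T, g (s t)) / (T : ℝ) - g a0
      = (∑ t ∈ Finset.Icc 1 T, (g (s t) - g a0)) / T := by
    rw [Finset.sum_sub_distrib]
    simp
    field_simp
  rw [e1, Real.norm_eq_abs, abs_div, abs_of_pos hT', ← mul_div_assoc, Finset.mul_sum]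
  gcongr
  exact (Finset.abs_sum_le_sum_abs _ _).trans (Finset.sum_le_sum fun t _ => hC _)

/-- If the leader's sequence `(a_t)` is no-regret against the follower's best manipulation
`F_opt` (with unique optimum `(a_fm, b_fm)`) and `(ā_t)` is no-regret against the best
response `F_br` (with unique optimum `(a_se, b_se)`), then the difference of the follower's
average rewards converges to `Gap(a_fm, a_se) = μ_f(a_fm, b_fm) − μ_f(a_se, b_se)`. -/
theorem manipulation_average_reward_gap
    {A B : Type*} [Fintype A] [Fintype B] [Nonempty A] [Nonempty B]
    (μl μf : A → B → ℝ)
    (hμl : ∀ a b, μl a b ∈ Set.Icc (0 : ℝ) 1)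
    (hμf : ∀ a b, μf a b ∈ Set.Icc (0 : ℝ) 1)
    (Fopt Fbr : A → B)
    (a_fm : A) (b_fm : B)
    (hfm : ∀ a : A, a ≠ a_fm → μl a (Fopt a) < μl a_fm (Fopt a_fm))
    (hbfm : b_fm = Fopt a_fm)
    (a_se : A) (b_se : B)
    (hse : ∀ a : A, a ≠ a_se → μl a (Fbr a) < μl a_se (Fbr a_se))
    (hbse : b_se = Fbr a_se)
    (aseq abar : ℕ → A)
    (hnr1 : NoRegret aseq (fun a => μl a (Fopt a)))
    (hnr2 : NoRegret abar (fun a => μl a (Fbr a))) :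
    Tendsto
      (fun T : ℕ =>
        (∑ t ∈ Finset.Icc 1 T, μf (aseq t) (Fopt (aseq t))) / T -
          (∑ t ∈ Finset.Icc 1 T, μf (abar t) (Fbr (abar t))) / T)
      atTop (nhds (μf a_fm b_fm - μf a_se b_se)) := by
  subst hbfm hbse
  exact (avg_tendsto_of_noRegret (fun a => μl a (Fopt a)) (fun a => μf a (Fopt a))
    a_fm hfm aseq hnr1).sub
    (avg_tendsto_of_noRegret (fun a => μl a (Fbr a)) (fun a => μf a (Fbr a))
      a_se hse abar hnr2)
end

section
/- Let 𝒜 be a finite nonempty set and S_0 > 4 a real number. Let (a_t)_{t=1}^{T} be any sequence in 𝒜, let N_t(a) = #{s ≤ t : a_s = a} denote counts, and let (μ̂_t)_{t=1}^{T} be arbitrary functions μ̂_t : 𝒜 → [0,1]. Suppose that at every round t, the chosen action a_t maximizes the index a ↦ μ̂_t(a) + √(S_0 / max(1, N_{t−1}(a))) over 𝒜. Then whenever T ≥ |𝒜| · (S_0 + 1), every action a ∈ 𝒜 satisfies N_T(a) ≥ S_0 / 4. -/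
/-- UCBE forced exploration: if at every round `t ≤ T` the chosen action `a_t` maximizes
the index `a ↦ μ̂_t(a) + √(S₀ / max(1, N_{t−1}(a)))` with `μ̂_t(a) ∈ [0,1]` and `S₀ > 4`,
then once `T ≥ |𝒜| (S₀ + 1)`, every action has been played at least `S₀/4` times. -/
theorem ucbe_forced_exploration
    {A : Type*} [Fintype A] [Nonempty A] [DecidableEq A]
    (S0 : ℝ) (hS0 : 4 < S0)
    (T : ℕ) (aseq : ℕ → A)
    (N : ℕ → A → ℕ)
    (hN : ∀ t a, N t a = ((Finset.Icc 1 t).filter (fun s => aseq s = a)).card)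
    (muhat : ℕ → A → ℝ)
    (hmuhat : ∀ t a, muhat t a ∈ Set.Icc (0 : ℝ) 1)
    (hchoice : ∀ t : ℕ, 1 ≤ t → t ≤ T → ∀ a : A,
      muhat t a + Real.sqrt (S0 / (max 1 (N (t - 1) a) : ℕ)) ≤
        muhat t (aseq t) + Real.sqrt (S0 / (max 1 (N (t - 1) (aseq t)) : ℕ)))
    (hT : (T : ℝ) ≥ (Fintype.card A : ℝ) * (S0 + 1)) :
    ∀ a : A, (N T a : ℝ) ≥ S0 / 4 := by
  intro a
  by_contra hcon
  have hlt : (N T a : ℝ) < S0 / 4 := not_le.mp hcon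
  have hmono : ∀ t, t ≤ T → N t a ≤ N T a := by
    intro t ht
    rw [hN, hN]
    exact Finset.card_le_card
      (Finset.filter_subset_filter _ (Finset.Icc_subset_Icc_right ht))
  have hsucc : ∀ t b, N (t + 1) b = N t b + if aseq (t + 1) = b then 1 else 0 := by
    intro t b
    rw [hN, hN, Finset.card_filter, Finset.card_filter,
      Finset.sum_Icc_succ_top (by omega)]
  have key : ∀ t, t ≤ T → ∀ b, (N t b : ℝ) < S0 + 1 := by
    intro t
    induction t with
    | zero =>
      intro _ b
      have h0 : N 0 b = 0 := by rw [hN]; simp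
      rw [h0]; push_cast; linarith
    | succ t ih =>
      intro ht b
      rw [hsucc]
      by_cases hb : aseq (t + 1) = b
      · rw [if_pos hb]
        have hc := hchoice (t + 1) (by omega) ht a
        rw [hb, Nat.add_sub_cancel] at hc
        have h1 := (hmuhat (t + 1) a).1
        have h2 := (hmuhat (t + 1) b).2
        have hNa : ((max 1 (N t a) : ℕ) : ℝ) < S0 / 4 := by
          have h3 : (N t a : ℝ) ≤ N T a := by exact_mod_cast hmono t (by omega)
          rw [Nat.cast_max]
          apply max_lt
          · push_cast; linarith
          · linarith
        have hpos : (0 : ℝ) < ((max 1 (N t a) : ℕ) : ℝ) := by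
          exact_mod_cast lt_of_lt_of_le Nat.one_pos (le_max_left _ _)
        have hs : 2 < Real.sqrt (S0 / ((max 1 (N t a) : ℕ) : ℝ)) := by
          apply Real.lt_sqrt_of_sq_lt
          rw [lt_div_iff₀ hpos]; linarith
        have hs' : 1 < Real.sqrt (S0 / ((max 1 (N t b) : ℕ) : ℝ)) := by linarith
        have hposb : (0 : ℝ) < ((max 1 (N t b) : ℕ) : ℝ) := by
          exact_mod_cast lt_of_lt_of_le Nat.one_pos (le_max_left _ _)
        have h4 : 1 < S0 / ((max 1 (N t b) : ℕ) : ℝ) := by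
          rw [Real.lt_sqrt (by norm_num)] at hs'
          linarith
        rw [lt_div_iff₀ hposb] at h4
        have h5 : (N t b : ℝ) ≤ ((max 1 (N t b) : ℕ) : ℝ) := by
          exact_mod_cast le_max_right _ _
        push_cast at *
        linarith
      · rw [if_neg hb]
        simpa using ih (by omega) b
  have hsum : ∑ b, N T b = T := by
    have h := Finset.card_eq_sum_card_fiberwise (s := Finset.Icc 1 T)
      (t := (Finset.univ : Finset A)) (f := aseq) (by intro x _; simp)
    simp only [hN]
    rw [← h]; simp
  have hsumR : ∑ b, (N T b : ℝ) = T := by exact_mod_cast hsum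
  have hl : ∑ b, (N T b : ℝ) < ∑ _b : A, (S0 + 1) :=
    Finset.sum_lt_sum_of_nonempty Finset.univ_nonempty (fun b _ => key T le_rfl b)
  rw [hsumR, Finset.sum_const, nsmul_eq_mul, Finset.card_univ] at hl
  linarith
end
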